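/- Let H be a heap, S a normal sub-heap of H, and e ∈ S. Let H/S denote the set of equivalence classes of the relation ∼_S, which is a heap under [ā, b̄, c̄] = overline{[a,b,c]}. Then the map sending the ∼_S-class of a ∈ H to the coset of a in G(H;e)/S is a group isomorphism from the retract G(H/S; S) (the class of e being S itself) onto the quotient group G(H;e)/S, where S is regarded as a normal subgroup of G(H;e). -/

import Mathlib

/-- A ternary operation is a heap operation if it is associative and
satisfies the Mal'cev identities. -/
def IsHeap {H : Type*} (op : H → H → H → H) : Prop :=
  (∀ a b c d e : H, op (op a b c) d e = op a b (op c d e)) ∧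
  (∀ a b : H, op a b b = a) ∧ (∀ a b : H, op b b a = a)

namespace IsHeap

variable {H : Type*} {op : H → H → H → H}

theorem op_op_cancel_right (hH : IsHeap op) (a b c d : H) : op (op a b c) c d = op a b d := by
  obtain ⟨op_assoc, -, op_self_left⟩ := hH
  rw [op_assoc, op_self_left]

-- `op a b e` is `a * b⁻¹` in the retract at `e`; both `∼_S` and the coset relation of `S` say
-- that it lies in `S`.
theorem eq_op_iff_op_eq (hH : IsHeap op) {a b s e : H} : a = op s e b ↔ op a b e = s := by
  have op_self_right : ∀ a b, op a b b = a := hH.2.1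
  constructor <;> rintro rfl <;> rw [hH.op_op_cancel_right, op_self_right]

theorem exists_op_mem_iff (hH : IsHeap op) {S : Set H}
    (hcl : ∀ a ∈ S, ∀ b ∈ S, ∀ c ∈ S, op a b c ∈ S) {e : H} (he : e ∈ S) {a b : H} :
    (∃ s ∈ S, op a b s ∈ S) ↔ op a b e ∈ S := by
  refine ⟨?_, fun h => ⟨e, he, h⟩⟩
  rintro ⟨s, hs, h⟩
  rw [← hH.op_op_cancel_right a b s e]
  exact hcl _ h s hs e he

theorem exists_eq_op_iff (hH : IsHeap op) {S : Set H} {a b e : H} :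
    (∃ s ∈ S, a = op s e b) ↔ op a b e ∈ S := by
  simp only [hH.eq_op_iff_op_eq, exists_eq_right']

end IsHeap

/-- Let `H` be a heap, `S` a normal sub-heap and `e ∈ S`.
Given the quotient heap `H/S` (the quotient of `H` by the sub-heap relation
`∼_S`, whose retract at the class `S` of `e` has product induced by
`(a,b) ↦ [a,e,b]`) and the quotient group `G(H;e)/S` (the quotient of `H`
by the coset relation of the subgroup `S` of `G(H;e)`, with the induced
product), the map sending the `∼_S`-class of `a` to the coset of `a` is a group
isomorphism from `G(H/S;S)` onto `G(H;e)/S`. -/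
theorem quotient_heap_retract_iso_quotient_group {H : Type*}
    (op : H → H → H → H) (hH : IsHeap op) (S : Set H)
    (hcl : ∀ a ∈ S, ∀ b ∈ S, ∀ c ∈ S, op a b c ∈ S) (e : H) (he : e ∈ S)
    (hnorm : ∀ a : H, ∀ s ∈ S, ∃ t ∈ S, op a e s = op t e a)
    -- the sub-heap relation `∼_S` and the quotient heap `H/S`
    (s₁ : Setoid H) (hs₁ : ∀ a b : H, s₁.r a b ↔ ∃ s ∈ S, op a b s ∈ S)
    -- the coset relation of the subgroup `S` of `G(H;e)`
    (s₂ : Setoid H) (hs₂ : ∀ a b : H, s₂.r a b ↔ ∃ s ∈ S, a = op s e b)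
    -- the product of `G(H/S;S)`, induced by `[-,e,-]` on classes
    (m₁ : Quotient s₁ → Quotient s₁ → Quotient s₁)
    (hm₁ : ∀ a b : H, m₁ (Quotient.mk s₁ a) (Quotient.mk s₁ b) =
      Quotient.mk s₁ (op a e b))
    -- the product of the quotient group `G(H;e)/S`, induced by `[-,e,-]` on cosets
    (m₂ : Quotient s₂ → Quotient s₂ → Quotient s₂)
    (hm₂ : ∀ a b : H, m₂ (Quotient.mk s₂ a) (Quotient.mk s₂ b) =
      Quotient.mk s₂ (op a e b)) :
    ∃ φ : Quotient s₁ → Quotient s₂,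
      (∀ a : H, φ (Quotient.mk s₁ a) = Quotient.mk s₂ a) ∧
      Function.Bijective φ ∧
      ∀ x y : Quotient s₁, φ (m₁ x y) = m₂ (φ x) (φ y) := by
  have rel_iff (a b : H) : s₁.r a b ↔ s₂.r a b := by
    rw [hs₁, hs₂, hH.exists_op_mem_iff hcl he, hH.exists_eq_op_iff]
  refine ⟨Quotient.congrRight rel_iff, fun _ => rfl, Equiv.bijective _, ?_⟩
  rintro ⟨a⟩ ⟨b⟩
  calc Quotient.congrRight rel_iff (m₁ ⟦a⟧ ⟦b⟧)
      = Quotient.congrRight rel_iff ⟦op a e b⟧ := by rw [hm₁]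
    _ = ⟦op a e b⟧ := rfl
    _ = m₂ ⟦a⟧ ⟦b⟧ := (hm₂ a b).symm
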